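/- For every integer n > 1 and every DWA B = ({a,b,i}, Q, q₀, δ, c) with exactly n + 2 states that realizes O_n, write q_j = δ̂(q₀, i^j) for 0 ≤ j ≤ n and s = δ̂(q₀, i^{n+1}). Then: the states q_0, …, q_n, s are pairwise distinct; δ(s, x) = s and c(s, x) = 0 for every letter x; for every j ≤ n, c(q_j, i) = 0, c(q_j, a) > 0 and c(q_j, b) < 0; and δ(q_j, a) = δ(q_j, b) = q_{j+1} for every j < n, while δ(q_n, a) = δ(q_n, b) = s. In other words, every minimal-state DWA realizing O_n is structurally isomorphic to the chain automaton. -/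

import Mathlib

/-- A deterministic weighted automaton (DWA) over alphabet `A` with state space `Q`. -/
structure DWA (A : Type) (Q : Type) where
  init : Q
  δ : Q → A → Q
  c : Q → A → ℤ

/-- The extended transition function `δ̂`. -/
def DWA.run {A Q : Type} (M : DWA A Q) (q : Q) (w : List A) : Q :=
  w.foldl M.δ q

/-- The accumulated weight of the run on `w` starting in state `q`. -/
def DWA.valFrom {A Q : Type} (M : DWA A Q) : Q → List A → ℤ
  | _, [] => 0
  | q, x :: w => M.c q x + M.valFrom (M.δ q x) w

/-- The value `A(w)` of a word: the sum of the weights along the run from the initial state. -/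
def DWA.val {A Q : Type} (M : DWA A Q) (w : List A) : ℤ :=
  M.valFrom M.init w

/-- The three-letter alphabet `{a, b, i}`. -/
inductive ABI where
  | a : ABI
  | b : ABI
  | i : ABI
deriving DecidableEq

open Classical in
/-- The observation function `O_n` on nonempty words over `{a, b, i}`:
`O_n(w) = 1` if `w` consists only of `i`'s, or `i^{n+1}` is a prefix of `w`, or
`i^k·a·b^{n-k}` or `i^k·b·a^{n-k}` is a prefix of `w` for some `k < n`; otherwise `O_n(w) = 2`
if the first letter of `w` different from `i` is `a`, and `O_n(w) = 0` if it is `b`. -/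
noncomputable def Obs (n : ℕ) (w : List ABI) : ℕ :=
  if (∀ x ∈ w, x = ABI.i) ∨
      (List.replicate (n + 1) ABI.i <+: w) ∨
      (∃ k < n, List.replicate k ABI.i ++ [ABI.a] ++ List.replicate (n - k) ABI.b <+: w) ∨
      (∃ k < n, List.replicate k ABI.i ++ [ABI.b] ++ List.replicate (n - k) ABI.a <+: w)
  then 1
  else if ∃ k, List.replicate k ABI.i ++ [ABI.a] <+: w then 2
  else 0

/-- A DWA `M` over `{a, b, i}` realizes `O_n` if, for every nonempty word `w`,
`M(w) < 0 ↔ O_n(w) = 0`, `M(w) = 0 ↔ O_n(w) = 1`, and `M(w) > 0 ↔ O_n(w) = 2`. -/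
def Realizes {Q : Type} (n : ℕ) (M : DWA ABI Q) : Prop :=
  ∀ w : List ABI, w ≠ [] →
    (M.val w < 0 ↔ Obs n w = 0) ∧ (M.val w = 0 ↔ Obs n w = 1) ∧ (0 < M.val w ↔ Obs n w = 2)

/-!
Call `q_j` the state reached after `i^j`. Every `a`-edge out of `q_0, …, q_n` has positive weight
and every `b`-edge negative weight, while the state `q_{n+1}` is a sink of weight `0`, which makes
the `q_j` distinct; hence they exhaust the `n + 2` states. For `{x, y} = {a, b}` there are two
constraints.

* Clock: for `k < n`, reading `y` repeatedly after `i^k x` enters the sink after exactly `n - k`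
  steps, because `O_n` becomes constantly `1` exactly then.
* Climb: if some `y`-edge leads to `q_t`, then `x` strictly increases the index on `q_t, …, q_n`.
  Otherwise `y`, some `i`s and many rounds of the cycle through a non-increasing `x`-edge give a
  word beginning (after `i`s) with `y` whose value has the sign of `x`.

A path entering the sink after `n` strictly increasing steps starts at index at most `1`, and if
it starts at `1`, then all its steps are by one. It remains to exclude the loops
`δ(q_0, x) = q_0`, where the two clocks contradict each other at `q_2`.
-/

namespace ABI

/-- The involution of the alphabet exchanging `a` and `b`, under which `O_n` is symmetric up to
exchanging the outcomes `0` and `2`. -/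
def swap : ABI → ABI
  | a => b
  | b => a
  | i => i

/-- The sign a letter imposes on the value of a word in which it is the first letter other
than `i`. It lets the cases `a` and `b` be treated at once. -/
def polarity : ABI → ℤ
  | a => 1
  | b => -1
  | i => 0

@[simp]
theorem swap_swap (x : ABI) : x.swap.swap = x := by cases x <;> rfl

theorem swap_ne_i {x : ABI} (hx : x ≠ i) : x.swap ≠ i := by cases x <;> simp_all [swap]

@[simp]
theorem polarity_swap (x : ABI) : x.swap.polarity = -x.polarity := by cases x <;> rfl

end ABI

section Words

variable {α : Type*} {z x y : α}

theorem replicate_append_cons_prefix_iff (hx : x ≠ z) (hy : y ≠ z) {l k : ℕ} {u v : List α} :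
    List.replicate l z ++ x :: u <+: List.replicate k z ++ y :: v ↔ l = k ∧ x = y ∧ u <+: v := by
  induction l generalizing k with
  | zero => cases k <;> simp [List.replicate_succ, List.cons_prefix_cons, hx]
  | succ l ih =>
    cases k <;> simp [List.replicate_succ, List.cons_prefix_cons, hy.symm, ih]

theorem replicate_prefix_replicate_append_cons_iff (hy : y ≠ z) {l k : ℕ} {v : List α} :
    List.replicate l z <+: List.replicate k z ++ y :: v ↔ l ≤ k := by
  induction l generalizing k with
  | zero => simp
  | succ l ih => cases k <;> simp [List.replicate_succ, List.cons_prefix_cons, hy.symm, ih]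

end Words

section Observation

variable {n k : ℕ} {x : ABI} {v : List ABI}

theorem obs_eq_one_iff {w : List ABI} :
    Obs n w = 1 ↔
      (∀ x ∈ w, x = ABI.i) ∨
      (List.replicate (n + 1) ABI.i <+: w) ∨
      (∃ k < n, List.replicate k ABI.i ++ [ABI.a] ++ List.replicate (n - k) ABI.b <+: w) ∨
      (∃ k < n, List.replicate k ABI.i ++ [ABI.b] ++ List.replicate (n - k) ABI.a <+: w) := by
  unfold Obs
  split_ifs with h <;> simp only [h, OfNat.ofNat_ne_one]

theorem obs_append_cons_eq_one_iff (hx : x ≠ ABI.i) :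
    Obs n (List.replicate k ABI.i ++ x :: v) = 1 ↔
      n < k ∨ k < n ∧ List.replicate (n - k) x.swap <+: v := by
  have not_all_i : ¬ ∀ y ∈ List.replicate k ABI.i ++ x :: v, y = ABI.i :=
    fun h => hx (h x (by simp))
  have ha : ABI.a ≠ ABI.i := by decide
  have hb : ABI.b ≠ ABI.i := by decide
  simp only [obs_eq_one_iff, not_all_i, replicate_prefix_replicate_append_cons_iff hx,
    List.append_assoc, List.singleton_append, replicate_append_cons_prefix_iff ha hx,
    replicate_append_cons_prefix_iff hb hx, Nat.succ_le_iff]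
  cases x <;> simp_all [ABI.swap]

theorem obs_append_a_ne_zero : Obs n (List.replicate k ABI.i ++ ABI.a :: v) ≠ 0 := by
  have starts_a : ∃ l, List.replicate l ABI.i ++ [ABI.a] <+:
      List.replicate k ABI.i ++ ABI.a :: v := ⟨k, v, by simp⟩
  unfold Obs
  split_ifs <;> decide

theorem obs_append_b_ne_two : Obs n (List.replicate k ABI.i ++ ABI.b :: v) ≠ 2 := by
  have not_starts_a : ¬ ∃ l, List.replicate l ABI.i ++ [ABI.a] <+:
      List.replicate k ABI.i ++ ABI.b :: v := by
    simp [replicate_append_cons_prefix_iff]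
  unfold Obs
  split_ifs <;> decide

end Observation

namespace DWA

variable {A Q : Type} (M : DWA A Q)

theorem run_append (p : Q) (u v : List A) : M.run p (u ++ v) = M.run (M.run p u) v :=
  List.foldl_append

theorem valFrom_append (p : Q) (u v : List A) :
    M.valFrom p (u ++ v) = M.valFrom p u + M.valFrom (M.run p u) v := by
  induction u generalizing p with
  | nil => exact (zero_add _).symm
  | cons x u ih => exact (congrArg (M.c p x + ·) (ih (M.δ p x))).trans (add_assoc _ _ _).symm

section Cycle

variable {M} {p : Q} {u : List A}

theorem valFrom_flatten_replicate (hu : M.run p u = p) (N : ℕ) :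
    M.valFrom p (List.replicate N u).flatten = N * M.valFrom p u := by
  induction N with
  | zero => simp [valFrom]
  | succ N ih =>
    rw [List.replicate_succ, List.flatten_cons, valFrom_append, hu, ih]
    push_cast
    ring

theorem mul_valFrom_nonpos_of_run_eq_self (hu : M.run p u = p) {σ C : ℤ}
    (hC : ∀ v, σ * M.valFrom p v ≤ C) : σ * M.valFrom p u ≤ 0 := by
  by_contra! hpos
  have bound := hC (List.replicate (C.natAbs + 1) u).flatten
  rw [valFrom_flatten_replicate hu] at bound
  push_cast at bound
  nlinarith [le_abs_self C, abs_nonneg C]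

end Cycle

/-- `M.EntersAt x p s d` says that the run from `p` reading `x` repeatedly is in the state `s`
precisely from step `d` on. -/
def EntersAt (x : A) (p s : Q) (d : ℕ) : Prop :=
  ∀ m, M.run p (List.replicate m x) = s ↔ d ≤ m

/-- `M.Climbs q N x t` says that along the sequence of states `q_t, …, q_{N-1}` the letter `x`
leads only to states of larger index. -/
def Climbs (q : ℕ → Q) (N : ℕ) (x : A) (t : ℕ) : Prop :=
  ∀ j k, t ≤ j → j < N → M.δ (q j) x = q k → j < k

variable {M} {x : A} {p s : Q} {d e : ℕ}

namespace EntersAt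

theorem unique (hd : M.EntersAt x p s d) (he : M.EntersAt x p s e) : d = e :=
  le_antisymm ((hd e).1 ((he e).2 le_rfl)) ((he d).1 ((hd d).2 le_rfl))

theorem eq_iff (h : M.EntersAt x p s d) : p = s ↔ d = 0 :=
  (h 0).trans Nat.le_zero

theorem step (h : M.EntersAt x p s (d + 1)) : M.EntersAt x (M.δ p x) s d :=
  fun m => (h (m + 1)).trans Nat.add_le_add_iff_right

end EntersAt

namespace Climbs

variable {q : ℕ → Q} {N t r : ℕ}

theorem mono (h : M.Climbs q N x t) (htr : t ≤ r) : M.Climbs q N x r :=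
  fun j k hj => h j k (htr.trans hj)

theorem add_le_of_entersAt (hq : ∀ p, ∃ j ≤ N, q j = p) (h : M.Climbs q N x t)
    (hrN : r ≤ N) (htr : t ≤ r) (hd : M.EntersAt x (q r) (q N) d) : r + d ≤ N := by
  induction d generalizing r with
  | zero => exact hrN
  | succ d ih =>
    have r_lt : r < N := lt_of_le_of_ne hrN fun hr => by simpa using hd.eq_iff.1 (by rw [hr])
    obtain ⟨k, hkN, hk⟩ := hq (M.δ (q r) x)
    have r_lt_k := h r k htr r_lt hk.symm
    have k_add_le := ih hkN (htr.trans r_lt_k.le) (hk ▸ hd.step)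
    omega

theorem δ_eq_succ (hq : ∀ p, ∃ j ≤ N, q j = p) (h : M.Climbs q N x r)
    (hrd : r + d = N) (hd : M.EntersAt x (q r) (q N) d) {j : ℕ} (hrj : r ≤ j) (hjN : j < N) :
    M.δ (q j) x = q (j + 1) := by
  induction d generalizing r with
  | zero => omega
  | succ d ih =>
    obtain ⟨k, hkN, hk⟩ := hq (M.δ (q r) x)
    have r_lt_k := h r k le_rfl (by omega) hk.symm
    have k_add_le := h.add_le_of_entersAt hq hkN r_lt_k.le (hk ▸ hd.step)
    obtain rfl : k = r + 1 := by omega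
    obtain rfl | r_lt_j := hrj.eq_or_lt
    · exact hk.symm
    · exact ih (h.mono r.le_succ) (by omega) (hk ▸ hd.step) r_lt_j

end Climbs

/-- The state `q_j` reached after reading `i^j`. -/
def spine {Q : Type} (M : DWA ABI Q) (j : ℕ) : Q :=
  M.run M.init (List.replicate j ABI.i)

theorem run_spine_replicate {Q : Type} (M : DWA ABI Q) (j m : ℕ) :
    M.run (M.spine j) (List.replicate m ABI.i) = M.spine (j + m) := by
  rw [spine, spine, ← run_append, List.replicate_append_replicate]

end DWA

namespace Realizes

variable {n : ℕ} {Q : Type} {M : DWA ABI Q} {x : ABI} {j k : ℕ}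

theorem val_eq_zero_iff (hM : Realizes n M) {w : List ABI} (hw : w ≠ []) :
    M.val w = 0 ↔ Obs n w = 1 :=
  (hM w hw).2.1

theorem val_append (hM : Realizes n M) (k : ℕ) (w : List ABI) :
    M.val (List.replicate k ABI.i ++ w) = M.valFrom (M.spine k) w := by
  have val_i : M.val (List.replicate k ABI.i) = 0 := by
    cases k with
    | zero => rfl
    | succ k => exact (hM.val_eq_zero_iff (by simp)).2 (obs_eq_one_iff.2 (.inl (by simp)))
  exact (M.valFrom_append _ _ _).trans (add_eq_right.2 val_i)

theorem valFrom_spine_i_eq_zero (hM : Realizes n M) (j m : ℕ) :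
    M.valFrom (M.spine j) (List.replicate m ABI.i) = 0 := by
  rw [← hM.val_append, List.replicate_append_replicate]
  simpa only [List.append_nil, DWA.valFrom] using hM.val_append (j + m) []

theorem c_i_eq_zero (hM : Realizes n M) (j : ℕ) : M.c (M.spine j) ABI.i = 0 := by
  simpa [DWA.valFrom] using hM.valFrom_spine_i_eq_zero j 1

theorem valFrom_cons_eq_zero_iff (hM : Realizes n M) (hx : x ≠ ABI.i) {v : List ABI} :
    M.valFrom (M.spine k) (x :: v) = 0 ↔
      n < k ∨ k < n ∧ List.replicate (n - k) x.swap <+: v := by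
  rw [← hM.val_append, hM.val_eq_zero_iff (by simp), obs_append_cons_eq_one_iff hx]

theorem polarity_mul_valFrom_nonneg (hM : Realizes n M) (k : ℕ) (x : ABI) (v : List ABI) :
    0 ≤ x.polarity * M.valFrom (M.spine k) (x :: v) := by
  have hw := hM (List.replicate k ABI.i ++ x :: v) (by simp)
  rw [hM.val_append] at hw
  cases x with
  | a => simpa [ABI.polarity] using not_lt.1 (mt hw.1.1 obs_append_a_ne_zero)
  | b => simpa [ABI.polarity] using not_lt.1 (mt hw.2.2.1 obs_append_b_ne_two)
  | i => simp [ABI.polarity]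

theorem polarity_mul_c_pos (hM : Realizes n M) (hx : x ≠ ABI.i) (hk : k ≤ n) :
    0 < x.polarity * M.c (M.spine k) x := by
  have valFrom_singleton : M.valFrom (M.spine k) [x] = M.c (M.spine k) x := add_zero _
  have c_ne_zero : M.c (M.spine k) x ≠ 0 := by
    rw [← valFrom_singleton, Ne, hM.valFrom_cons_eq_zero_iff hx, List.prefix_nil,
      List.replicate_eq_nil_iff]
    omega
  have polarity_ne_zero : x.polarity ≠ 0 := by cases x <;> simp_all [ABI.polarity]
  exact lt_of_le_of_ne (valFrom_singleton ▸ hM.polarity_mul_valFrom_nonneg k x [])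
    (mul_ne_zero polarity_ne_zero c_ne_zero).symm

theorem c_a_pos (hM : Realizes n M) (hk : k ≤ n) : 0 < M.c (M.spine k) ABI.a := by
  simpa only [ABI.polarity, one_mul] using hM.polarity_mul_c_pos (x := ABI.a) (by decide) hk

theorem c_b_neg (hM : Realizes n M) (hk : k ≤ n) : M.c (M.spine k) ABI.b < 0 := by
  simpa only [ABI.polarity, neg_one_mul, neg_pos] using
    hM.polarity_mul_c_pos (x := ABI.b) (by decide) hk

section Sink

theorem valFrom_sink_eq_zero (hM : Realizes n M) (w : List ABI) :
    M.valFrom (M.spine (n + 1)) w = 0 := by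
  rw [← hM.val_append, hM.val_eq_zero_iff (by simp)]
  exact obs_eq_one_iff.2 (.inr (.inl (List.prefix_append _ _)))

theorem c_sink_eq_zero (hM : Realizes n M) (x : ABI) : M.c (M.spine (n + 1)) x = 0 :=
  (add_zero _).symm.trans (hM.valFrom_sink_eq_zero [x])

theorem spine_ne_sink (hM : Realizes n M) (hj : j ≤ n) : M.spine j ≠ M.spine (n + 1) := fun h => by
  simpa [h, hM.c_sink_eq_zero] using hM.c_a_pos hj

theorem injOn_spine (hM : Realizes n M) : Set.InjOn M.spine (Set.Iic (n + 1)) := by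
  have ne_of_lt {j k : ℕ} (hjk : j < k) (hk : k ≤ n + 1) : M.spine j ≠ M.spine k := fun h => by
    have shifted : M.spine (j + (n + 1 - k)) = M.spine (k + (n + 1 - k)) := by
      rw [← M.run_spine_replicate, h, M.run_spine_replicate]
    rw [Nat.add_sub_of_le hk] at shifted
    exact hM.spine_ne_sink (by omega) shifted
  intro j hj k hk h
  by_contra hjk
  rcases lt_or_gt_of_ne hjk with hlt | hgt
  · exact ne_of_lt hlt hk h
  · exact ne_of_lt hgt hj h.symm

theorem exists_spine_eq (hM : Realizes n M) [Fintype Q] (hcard : Fintype.card Q ≤ n + 2) (p : Q) :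
    ∃ j ≤ n + 1, M.spine j = p := by
  have injective : Function.Injective fun j : Fin (n + 2) => M.spine j := fun j k h =>
    Fin.ext (hM.injOn_spine (Nat.lt_succ_iff.1 j.2) (Nat.lt_succ_iff.1 k.2) h)
  obtain ⟨j, hj⟩ := (injective.bijective_of_nat_card_le (by simpa using hcard)).surjective p
  exact ⟨j, Nat.lt_succ_iff.1 j.2, hj⟩

end Sink

section Spanned

theorem eq_sink_iff (hM : Realizes n M) (hQ : ∀ p, ∃ j ≤ n + 1, M.spine j = p) {p : Q} :
    p = M.spine (n + 1) ↔ ∀ w, M.valFrom p w = 0 := by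
  refine ⟨fun h w => h ▸ hM.valFrom_sink_eq_zero w, fun h => ?_⟩
  obtain ⟨j, hj, rfl⟩ := hQ p
  have not_le : ¬ j ≤ n := fun hjn => by
    have c_eq_zero : M.c (M.spine j) ABI.a = 0 := (add_zero _).symm.trans (h [ABI.a])
    simpa [c_eq_zero] using hM.c_a_pos hjn
  rw [show j = n + 1 by omega]

theorem δ_sink_eq_self (hM : Realizes n M) (hQ : ∀ p, ∃ j ≤ n + 1, M.spine j = p) (x : ABI) :
    M.δ (M.spine (n + 1)) x = M.spine (n + 1) :=
  (hM.eq_sink_iff hQ).2 fun w => by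
    simpa only [DWA.valFrom, hM.c_sink_eq_zero, zero_add] using hM.valFrom_sink_eq_zero (x :: w)

theorem entersAt (hM : Realizes n M) (hQ : ∀ p, ∃ j ≤ n + 1, M.spine j = p) (hx : x ≠ ABI.i)
    (hk : k < n) : M.EntersAt x.swap (M.δ (M.spine k) x) (M.spine (n + 1)) (n - k) := by
  intro m
  have split (w : List ABI) : M.valFrom (M.spine k) (x :: (List.replicate m x.swap ++ w)) =
      M.valFrom (M.spine k) (x :: List.replicate m x.swap) +
        M.valFrom (M.run (M.δ (M.spine k) x) (List.replicate m x.swap)) w :=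
    M.valFrom_append (M.spine k) (x :: List.replicate m x.swap) w
  have val_zero {v : List ABI} (hv : List.replicate (n - k) x.swap <+: v) :
      M.valFrom (M.spine k) (x :: v) = 0 :=
    (hM.valFrom_cons_eq_zero_iff hx).2 (.inr ⟨hk, hv⟩)
  rw [hM.eq_sink_iff hQ]
  constructor
  · intro sink
    have padded := split (List.replicate (n - k) x.swap)
    rw [sink, add_zero, List.replicate_append_replicate, val_zero] at padded
    · obtain hnk | ⟨-, hprefix⟩ := (hM.valFrom_cons_eq_zero_iff hx).1 padded.symm
      · omega
      · simpa using hprefix.length_le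
    · simp [List.prefix_replicate_iff]
  · intro hm w
    have hprefix : List.replicate (n - k) x.swap <+: List.replicate m x.swap := by
      simpa [List.prefix_replicate_iff] using hm
    have := split w
    rwa [val_zero hprefix, val_zero (hprefix.trans (List.prefix_append _ _)), zero_add,
      eq_comm] at this

theorem climbs (hM : Realizes n M) (hx : x ≠ ABI.i) {l t : ℕ}
    (ht : M.δ (M.spine l) x.swap = M.spine t) : M.Climbs M.spine (n + 1) x t := by
  intro j k htj hj hk
  by_contra! hkj
  have run_loop : M.run (M.spine j) (x :: List.replicate (j - k) ABI.i) = M.spine j := by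
    change M.run (M.δ (M.spine j) x) _ = _
    rw [hk, M.run_spine_replicate, Nat.add_sub_of_le hkj]
  have val_loop : M.valFrom (M.spine j) (x :: List.replicate (j - k) ABI.i) =
      M.c (M.spine j) x := by
    rw [DWA.valFrom, hk, hM.valFrom_spine_i_eq_zero, add_zero]
  have bounded (v : List ABI) :
      x.polarity * M.valFrom (M.spine j) v ≤ -(x.polarity * M.c (M.spine l) x.swap) := by
    have := hM.polarity_mul_valFrom_nonneg l x.swap (List.replicate (j - t) ABI.i ++ v)
    rw [DWA.valFrom, ht, DWA.valFrom_append, hM.valFrom_spine_i_eq_zero, zero_add,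
      M.run_spine_replicate, Nat.add_sub_of_le htj, ABI.polarity_swap] at this
    linarith
  have := DWA.mul_valFrom_nonpos_of_run_eq_self run_loop bounded
  rw [val_loop] at this
  exact this.not_gt (hM.polarity_mul_c_pos hx (Nat.lt_succ_iff.1 hj))

theorem δ_init_le_one (hM : Realizes n M) (hQ : ∀ p, ∃ j ≤ n + 1, M.spine j = p) (hn : 0 < n)
    (hx : x ≠ ABI.i) {t : ℕ} (ht : t ≤ n + 1) (hδ : M.δ (M.spine 0) x = M.spine t) : t ≤ 1 := by
  have climbs_swap := hM.climbs (x := x.swap) (ABI.swap_ne_i hx) (by simpa using hδ)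
  have := climbs_swap.add_le_of_entersAt hQ ht le_rfl (hδ ▸ hM.entersAt hQ hx hn)
  omega

theorem δ_swap_eq_succ (hM : Realizes n M) (hQ : ∀ p, ∃ j ≤ n + 1, M.spine j = p) (hn : 0 < n)
    (hx : x ≠ ABI.i) (hδ : M.δ (M.spine 0) x = M.spine 1) (hj : 1 ≤ j) (hjn : j ≤ n) :
    M.δ (M.spine j) x.swap = M.spine (j + 1) := by
  have climbs_swap := hM.climbs (x := x.swap) (ABI.swap_ne_i hx) (by simpa using hδ)
  exact climbs_swap.δ_eq_succ hQ (by omega) (hδ ▸ hM.entersAt hQ hx hn) hj (by omega)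

theorem δ_init_ne_init (hM : Realizes n M) (hQ : ∀ p, ∃ j ≤ n + 1, M.spine j = p) (hn : 1 < n)
    (hx : x ≠ ABI.i) : M.δ (M.spine 0) x ≠ M.spine 0 := by
  intro loop
  obtain ⟨m, rfl⟩ := Nat.exists_eq_add_of_le' hn
  have hy := ABI.swap_ne_i hx
  have climbs_y := hM.climbs hy (by simpa using loop)
  have y_zero : M.δ (M.spine 0) x.swap = M.spine 1 := by
    obtain ⟨t, htn, ht⟩ := hQ (M.δ (M.spine 0) x.swap)
    have t_pos := climbs_y 0 t le_rfl (by omega) ht.symm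
    have t_le := hM.δ_init_le_one hQ (by omega) hy htn ht.symm
    rw [← ht, show t = 1 by omega]
  have x_one : M.δ (M.spine 1) x = M.spine 2 := by
    simpa using hM.δ_swap_eq_succ hQ (by omega) hy y_zero le_rfl hn.le
  have y_one : M.δ (M.spine 1) x.swap = M.spine 2 := by
    obtain ⟨t, htn, ht⟩ := hQ (M.δ (M.spine 1) x.swap)
    have t_gt := climbs_y 1 t (Nat.zero_le 1) (by omega) ht.symm
    have enters_x : M.EntersAt x (M.spine t) (M.spine (m + 2 + 1)) (m + 1) := by
      simpa [ht] using hM.entersAt hQ hy hn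
    have t_add_le := (hM.climbs hx y_zero).add_le_of_entersAt hQ htn t_gt.le enters_x
    rw [← ht, show t = 2 by omega]
  have enters_via_x : M.EntersAt x.swap (M.spine 2) (M.spine (m + 2 + 1)) (m + 1) :=
    x_one ▸ hM.entersAt hQ hx hn
  have enters_via_y : M.EntersAt x.swap (M.spine 2) (M.spine (m + 2 + 1)) m := by
    have enters_zero : M.EntersAt x.swap (M.spine 0) (M.spine (m + 2 + 1)) (m + 2) :=
      loop ▸ hM.entersAt hQ hx (Nat.zero_lt_succ _)
    simpa [y_zero, y_one] using enters_zero.step.step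
  exact absurd (enters_via_x.unique enters_via_y) (Nat.succ_ne_self m)

theorem δ_eq_succ (hM : Realizes n M) (hQ : ∀ p, ∃ j ≤ n + 1, M.spine j = p) (hn : 1 < n)
    (hx : x ≠ ABI.i) (hj : j ≤ n) : M.δ (M.spine j) x = M.spine (j + 1) := by
  have init_step {y : ABI} (hy : y ≠ ABI.i) : M.δ (M.spine 0) y = M.spine 1 := by
    obtain ⟨t, htn, ht⟩ := hQ (M.δ (M.spine 0) y)
    have t_ne_zero : t ≠ 0 := fun h => hM.δ_init_ne_init hQ hn hy (by rw [← ht, h])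
    have t_le := hM.δ_init_le_one hQ (by omega) hy htn ht.symm
    rw [← ht, show t = 1 by omega]
  obtain rfl | j_pos := Nat.eq_zero_or_pos j
  · exact init_step hx
  · have hy := ABI.swap_ne_i hx
    simpa using hM.δ_swap_eq_succ hQ (by omega) hy (init_step hy) j_pos hj

end Spanned

end Realizes

/-- every DWA with exactly `n + 2` states realizing `O_n` is structurally
isomorphic to the chain automaton. Writing `q j = δ̂(q₀, i^j)` (so `s = q (n+1)`):
the states `q 0, …, q n, q (n+1)` are pairwise distinct; the state `s = q (n+1)` is a sink
whose transitions all have weight `0`; for every `j ≤ n`, `c(q_j, i) = 0`, `c(q_j, a) > 0`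
and `c(q_j, b) < 0`; and every transition from `q_j` leads to `q_{j+1}`. -/
theorem minimal_dwa_structure (n : ℕ) (hn : 1 < n) (Q : Type) [Fintype Q]
    (M : DWA ABI Q) (hcard : Fintype.card Q = n + 2) (hM : Realizes n M) :
    let q : ℕ → Q := fun j => M.run M.init (List.replicate j ABI.i)
    (∀ j k, j ≤ n + 1 → k ≤ n + 1 → j ≠ k → q j ≠ q k) ∧
    (∀ x, M.δ (q (n + 1)) x = q (n + 1) ∧ M.c (q (n + 1)) x = 0) ∧
    (∀ j ≤ n, M.c (q j) ABI.i = 0 ∧ 0 < M.c (q j) ABI.a ∧ M.c (q j) ABI.b < 0) ∧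
    (∀ j < n, M.δ (q j) ABI.a = q (j + 1) ∧ M.δ (q j) ABI.b = q (j + 1)) ∧
    (M.δ (q n) ABI.a = q (n + 1) ∧ M.δ (q n) ABI.b = q (n + 1)) := by
  intro q
  have ha : ABI.a ≠ ABI.i := by decide
  have hb : ABI.b ≠ ABI.i := by decide
  have hQ := hM.exists_spine_eq hcard.le
  have step {x : ABI} (hx : x ≠ ABI.i) {j : ℕ} (hj : j ≤ n) : M.δ (q j) x = q (j + 1) :=
    hM.δ_eq_succ hQ hn hx hj
  exact ⟨fun j k hj hk => mt (hM.injOn_spine hj hk),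
    fun x => ⟨hM.δ_sink_eq_self hQ x, hM.c_sink_eq_zero x⟩,
    fun j hj => ⟨hM.c_i_eq_zero j, hM.c_a_pos hj, hM.c_b_neg hj⟩,
    fun j hj => ⟨step ha hj.le, step hb hj.le⟩, step ha le_rfl, step hb le_rfl⟩
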